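/- For every ε > 0 there exists a constant C = C(ε) such that the following holds. Let p be a prime, let a, b be integers with p ∤ ab, let K, M, N ≥ 1 be real numbers, and let U ≥ 1 be a real number. Then the number of 10-tuples (k, k̃, m₁, m̃₁, m₂, m̃₂, n, ñ, u, ũ) with k, k̃ positive integers at most K, m₁, m̃₁, m₂, m̃₂ positive integers at most M with m₁ ≠ m₂ and m̃₁ ≠ m̃₂, n, ñ integers with |n|, |ñ| ≤ 2N, and u, ũ positive integers with U < u, ũ ≤ 2U, satisfying both congruences (a·k + b·m₁·n)·m̃₁·ũ ≡ (a·k̃ + b·m̃₁·ñ)·m₁·u ≢ 0 (mod p) and (a·k + b·m₂·n)·m̃₂·ũ ≡ (a·k̃ + b·m̃₂·ñ)·m₂·u ≢ 0 (mod p), is at most C · p^ε · K·N·U·(K + M²)·(1 + (|a|·K + 2|b|·M·N)·M·U/p)². -/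

import Mathlib

open Finset

/-!
Fix `(k, n, u', m₁', m₂')` and count its completions `(k', n', u, m₁, m₂)`. Moving `b mᵢ n mᵢ' u'`
to the other side of the `i`-th congruence shows that `mᵢ` times an integer cofactor lies in the
fixed residue class of `a k u' mᵢ'`, and this product is `O(p X)`, where `X` is the quantity that is
squared, with `1` added, in the bound. If `p X` is at most `p ^ 6`, the divisor bound leaves
`O(p ^ ε (1 + X))` choices for `mᵢ` and its cofactor. As `m₁' ≠ m₂'`, the two cofactors determine
`k' u` and `n' u`, so that `u` runs over the divisors of a fixed integer. If `p X` is larger, it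
suffices to fix `(u, m₁, m₂)` and count the pairs `(k', n')` by their residue classes modulo `p`.
-/

lemma exists_add_one_le_mul_rpow_pow {δ : ℝ} (hδ : 0 < δ) :
    ∃ c : ℝ, 1 ≤ c ∧ ∀ (v : ℕ) (q : ℝ), 2 ≤ q → (v : ℝ) + 1 ≤ c * (q ^ δ) ^ v := by
  obtain ⟨x, hx, h2δ⟩ : ∃ x : ℝ, 0 < x ∧ 2 ^ δ = 1 + x :=
    ⟨2 ^ δ - 1, sub_pos.2 (Real.one_lt_rpow one_lt_two hδ), by ring⟩
  refine ⟨1 + 1 / x, le_add_of_nonneg_right (by positivity), fun v q hq ↦ ?_⟩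
  have bernoulli : 1 + v * x ≤ (q ^ δ) ^ v :=
    calc 1 + v * x ≤ (1 + x) ^ v := one_add_mul_le_pow (by linarith) v
      _ = (2 ^ δ) ^ v := by rw [h2δ]
      _ ≤ (q ^ δ) ^ v := by gcongr
  calc (v : ℝ) + 1 ≤ v + 1 + (v * x + 1 / x) := le_add_of_nonneg_right (by positivity)
    _ = (1 + 1 / x) * (1 + v * x) := by field_simp; ring
    _ ≤ (1 + 1 / x) * (q ^ δ) ^ v := by gcongr

lemma natCast_rpow_eq_prod_primeFactors {n : ℕ} (hn : n ≠ 0) (δ : ℝ) :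
    (n : ℝ) ^ δ = ∏ q ∈ n.primeFactors, ((q : ℝ) ^ δ) ^ n.factorization q := by
  conv_lhs => rw [← Nat.prod_factorization_pow_eq_self hn, Finsupp.prod,
    Nat.support_factorization, Nat.cast_prod, ← Real.finsetProd_rpow _ _ fun _ _ ↦ by positivity]
  refine prod_congr rfl fun q _ ↦ ?_
  rw [Nat.cast_pow, ← Real.rpow_natCast, ← Real.rpow_natCast, ← Real.rpow_mul (by positivity),
    ← Real.rpow_mul (by positivity), mul_comm]

-- Only the primes `q` with `q ^ δ < 2`, of which there are finitely many, cost a constant.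
theorem exists_card_divisors_le_mul_rpow {δ : ℝ} (hδ : 0 < δ) :
    ∃ C : ℝ, 1 ≤ C ∧ ∀ n : ℕ, n ≠ 0 → (#n.divisors : ℝ) ≤ C * (n : ℝ) ^ δ := by
  obtain ⟨c, hc, hsmall⟩ := exists_add_one_le_mul_rpow_pow hδ
  obtain ⟨R, hR⟩ := exists_nat_ge ((2 : ℝ) ^ (1 / δ))
  have hlarge (v : ℕ) {q : ℕ} (hq : R ≤ q) : (v : ℝ) + 1 ≤ ((q : ℝ) ^ δ) ^ v := by
    have two_le : 2 ≤ (q : ℝ) ^ δ :=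
      calc (2 : ℝ) = ((2 : ℝ) ^ (1 / δ)) ^ δ := by
            rw [← Real.rpow_mul two_pos.le, one_div, inv_mul_cancel₀ hδ.ne', Real.rpow_one]
        _ ≤ (q : ℝ) ^ δ := by gcongr; exact hR.trans (mod_cast hq)
    calc (v : ℝ) + 1 ≤ 2 ^ v := mod_cast Nat.lt_two_pow_self
      _ ≤ ((q : ℝ) ^ δ) ^ v := by gcongr
  refine ⟨c ^ R, one_le_pow₀ hc, fun n hn ↦ ?_⟩
  have hfactor : ∀ q ∈ n.primeFactors, (n.factorization q : ℝ) + 1 ≤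
      (if q < R then c else 1) * ((q : ℝ) ^ δ) ^ n.factorization q := by
    intro q hq
    split_ifs with hqR
    · exact hsmall _ _ (mod_cast (Nat.prime_of_mem_primeFactors hq).two_le)
    · rw [one_mul]
      exact hlarge _ (not_lt.1 hqR)
  have hconst : ∏ q ∈ n.primeFactors, (if q < R then c else 1) ≤ c ^ R := by
    rw [← prod_filter, prod_const]
    refine pow_le_pow_right₀ hc ?_
    simpa using card_le_card (show {q ∈ n.primeFactors | q < R} ⊆ range R by intro; simp)
  calc (#n.divisors : ℝ) = ∏ q ∈ n.primeFactors, ((n.factorization q : ℝ) + 1) := by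
        rw [Nat.card_divisors hn]; push_cast; rfl
    _ ≤ ∏ q ∈ n.primeFactors,
          (if q < R then c else 1) * ((q : ℝ) ^ δ) ^ n.factorization q :=
        prod_le_prod (fun _ _ ↦ by positivity) hfactor
    _ ≤ c ^ R * (n : ℝ) ^ δ := by
        rw [prod_mul_distrib, natCast_rpow_eq_prod_primeFactors hn]
        gcongr

lemma exists_card_divisors_le_mul_rpow_of_le_pow {δ : ℝ} (hδ : 0 < δ) {j : ℕ} (hj : 0 < j) :
    ∃ C : ℝ, 1 ≤ C ∧ ∀ {x : ℝ}, 0 ≤ x → ∀ {n : ℕ}, n ≠ 0 → (n : ℝ) ≤ x ^ j →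
      (#n.divisors : ℝ) ≤ C * x ^ δ := by
  obtain ⟨C, hC, hdiv⟩ := exists_card_divisors_le_mul_rpow (show 0 < δ / j by positivity)
  refine ⟨C, hC, fun {x} hx {n} hn hnx ↦ ?_⟩
  calc (#n.divisors : ℝ) ≤ C * (n : ℝ) ^ (δ / j) := hdiv n hn
    _ ≤ C * (x ^ j) ^ (δ / j) := by gcongr
    _ = C * x ^ δ := by
        rw [← Real.rpow_natCast_mul hx, mul_div_cancel₀ δ (by positivity)]

lemma card_le_mul_card_of_fiber_le {α β : Type*} [DecidableEq β] {s : Finset α} {t : Finset β}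
    {f : α → β} {B : ℝ} (hf : ∀ x ∈ s, f x ∈ t) (hB : ∀ y ∈ t, (#{x ∈ s | f x = y} : ℝ) ≤ B) :
    (#s : ℝ) ≤ B * #t := by
  rw [card_eq_sum_card_fiberwise hf, Nat.cast_sum, mul_comm, ← nsmul_eq_mul]
  exact sum_le_card_nsmul t _ B hB

lemma card_le_of_pairwise_modEq {p : ℕ} (hp : 0 < p) {S : Finset ℤ} {x y : ℝ} (hxy : x ≤ y)
    (hS : ∀ s ∈ S, x ≤ s ∧ s ≤ y) (hmod : ∀ s ∈ S, ∀ t ∈ S, s ≡ t [ZMOD p]) :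
    (#S : ℝ) ≤ (y - x) / p + 1 := by
  have hlen : 0 ≤ (y - x) / p := div_nonneg (sub_nonneg.2 hxy) p.cast_nonneg
  rcases S.eq_empty_or_nonempty with rfl | hne
  · simpa using hlen.trans (le_add_of_nonneg_right zero_le_one)
  let m := S.min' hne
  have hm : m ∈ S := S.min'_mem hne
  have hdiv {s : ℤ} (hs : s ∈ S) : (p : ℤ) * ((s - m) / p) = s - m :=
    Int.mul_ediv_cancel' (hmod m hm s hs).dvd
  have hcard : #S ≤ #(Icc (0 : ℤ) ⌊(y - x) / p⌋) := by
    refine card_le_card_of_injOn (fun s ↦ (s - m) / p) (fun s hs ↦ ?_) fun s hs t ht hst ↦ ?_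
    · refine mem_Icc.2 ⟨Int.ediv_nonneg (sub_nonneg.2 (S.min'_le s hs)) (by positivity), ?_⟩
      rw [Int.le_floor, le_div_iff₀' (by positivity)]
      calc (p : ℝ) * ((s - m) / (p : ℤ) : ℤ) = s - m := mod_cast hdiv hs
        _ ≤ y - x := sub_le_sub (hS s hs).2 (hS m hm).1
    · linarith [hdiv hs, hdiv ht, congrArg (fun j : ℤ ↦ (p : ℤ) * j) hst]
  calc (#S : ℝ) ≤ #(Icc (0 : ℤ) ⌊(y - x) / p⌋) := mod_cast hcard
    _ = ⌊(y - x) / p⌋₊ + 1 := by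
        rw [Int.card_Icc, sub_zero, ← Int.natCast_floor_eq_floor hlen]
        exact_mod_cast rfl
    _ ≤ (y - x) / p + 1 := by gcongr; exact Nat.floor_le hlen

lemma mem_Icc_one_floor {m : ℕ} {M : ℝ} : m ∈ Icc 1 ⌊M⌋₊ ↔ 1 ≤ m ∧ (m : ℝ) ≤ M := by
  rw [mem_Icc]
  exact and_congr_right fun hm ↦ Nat.le_floor_iff' (Nat.one_le_iff_ne_zero.1 hm)

lemma mem_Icc_neg_floor {n : ℤ} {L : ℝ} : n ∈ Icc (-⌊L⌋) ⌊L⌋ ↔ |(n : ℝ)| ≤ L := by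
  rw [mem_Icc, ← abs_le, Int.le_floor, Int.cast_abs]

lemma card_Icc_one_floor_le {K : ℝ} (hK : 0 ≤ K) : (#(Icc 1 ⌊K⌋₊) : ℝ) ≤ K := by
  rw [Nat.card_Icc, Nat.add_sub_cancel]
  exact Nat.floor_le hK

lemma card_Icc_neg_floor_le {L : ℝ} (hL : 0 ≤ L) : (#(Icc (-⌊L⌋) ⌊L⌋) : ℝ) ≤ 2 * L + 1 := by
  have h := card_le_of_pairwise_modEq one_pos (S := Icc (-⌊L⌋) ⌊L⌋) (x := -L) (y := L)
    (by linarith) (fun n hn ↦ abs_le.1 (mem_Icc_neg_floor.1 hn)) fun _ _ _ _ ↦ by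
      simp [Int.modEq_one]
  simpa [two_mul] using h

lemma Ioc_floor_subset_Icc_one {U W : ℝ} : Ioc ⌊U⌋₊ ⌊W⌋₊ ⊆ Icc 1 ⌊W⌋₊ := by
  intro u hu
  rw [mem_Ioc] at hu
  exact mem_Icc.2 ⟨Nat.one_le_iff_ne_zero.2 hu.1.ne_bot, hu.2⟩

/-- The pairs `(m, z)` with `1 ≤ m ≤ M`, `|m z| ≤ V` and `m z ≡ Y` modulo `p`. -/
noncomputable def factorPairs (p : ℕ) (M V : ℝ) (Y : ℤ) : Finset (ℕ × ℤ) :=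
  {q ∈ Icc 1 ⌊M⌋₊ ×ˢ Icc (-⌊V⌋) ⌊V⌋ | |((q.1 * q.2 : ℤ) : ℝ)| ≤ V ∧ q.1 * q.2 ≡ Y [ZMOD p]}

section FactorPairs

variable {p : ℕ} {M V : ℝ} {Y : ℤ}

lemma mem_factorPairs {m : ℕ} {z : ℤ} :
    (m, z) ∈ factorPairs p M V Y ↔
      (1 ≤ m ∧ (m : ℝ) ≤ M) ∧ |((m * z : ℤ) : ℝ)| ≤ V ∧ m * z ≡ Y [ZMOD p] := by
  simp only [factorPairs, mem_filter, mem_product, mem_Icc_one_floor, mem_Icc_neg_floor, and_assoc,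
    and_congr_right_iff, and_iff_right_iff_imp, and_imp]
  intro hm _ hV _
  refine le_trans ?_ hV
  rw [Int.cast_mul, abs_mul]
  exact le_mul_of_one_le_left (abs_nonneg _) (by simpa using hm)

lemma card_factorPairs_snd_ne_zero_le {D : ℝ} (hp : 0 < p) (hV : 0 ≤ V) (hD₀ : 0 ≤ D)
    (hD : ∀ n : ℕ, n ≠ 0 → (n : ℝ) ≤ V → (#n.divisors : ℝ) ≤ D) :
    (#{q ∈ factorPairs p M V Y | q.2 ≠ 0} : ℝ) ≤ D * (2 * V / p + 1) := by
  set T := {q ∈ factorPairs p M V Y | q.2 ≠ 0} with hT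
  have mem_T {m : ℕ} {z : ℤ} (h : (m, z) ∈ T) :
      m ≠ 0 ∧ z ≠ 0 ∧ |((m * z : ℤ) : ℝ)| ≤ V ∧ m * z ≡ Y [ZMOD p] := by
    rw [hT, mem_filter, mem_factorPairs] at h
    exact ⟨Nat.one_le_iff_ne_zero.1 h.1.1.1, h.2, h.1.2⟩
  let product : ℕ × ℤ → ℤ := fun q ↦ q.1 * q.2
  have hfiber : ∀ v ∈ T.image product, (#{q ∈ T | product q = v} : ℝ) ≤ D := by
    rintro _ hv
    obtain ⟨⟨m₀, z₀⟩, h₀, rfl⟩ := mem_image.1 hv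
    obtain ⟨hm₀, hz₀, hV₀, -⟩ := mem_T h₀
    have hv₀ : (product (m₀, z₀)).natAbs ≠ 0 := by simp [product, hm₀, hz₀]
    refine le_trans (mod_cast card_le_card_of_injOn Prod.fst ?_ ?_)
      (hD _ hv₀ (by rwa [Nat.cast_natAbs, Int.cast_abs]))
    · rintro ⟨m, z⟩ h
      have hq : product (m, z) = product (m₀, z₀) := (mem_filter.1 h).2
      exact Nat.mem_divisors.2 ⟨Int.natCast_dvd.1 ⟨z, hq.symm⟩, hv₀⟩
    · rintro ⟨m, z⟩ h ⟨m', z'⟩ h' (rfl : m = m')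
      obtain ⟨hT, hq⟩ := mem_filter.1 h
      have hzz : (m : ℤ) * z = m * z' := hq.trans (mem_filter.1 h').2.symm
      rw [mul_left_cancel₀ (mod_cast (mem_T hT).1) hzz]
  have himage : (#(T.image product) : ℝ) ≤ (V - -V) / p + 1 := by
    refine card_le_of_pairwise_modEq hp (by linarith) (forall_mem_image.2 ?_)
      (forall_mem_image.2 fun q hq ↦ forall_mem_image.2 fun q' hq' ↦ ?_)
    · exact fun q hq ↦ abs_le.1 (mem_T hq).2.2.1
    · exact (mem_T hq).2.2.2.trans (mem_T hq').2.2.2.symm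
  calc (#T : ℝ) ≤ D * #(T.image product) :=
        card_le_mul_card_of_fiber_le (fun _ ↦ mem_image_of_mem _) hfiber
    _ ≤ D * (2 * V / p + 1) := by
        gcongr
        exact himage.trans_eq (by ring)

lemma card_factorPairs_snd_eq_zero_le (hM : 0 ≤ M) :
    (#{q ∈ factorPairs p M V Y | q.2 = 0} : ℝ) ≤ if (p : ℤ) ∣ Y then M else 0 := by
  split_ifs with hY
  · have hcard : #{q ∈ factorPairs p M V Y | q.2 = 0} ≤ #(Icc 1 ⌊M⌋₊) := by
      refine card_le_card_of_injOn Prod.fst (fun q hq ↦ ?_) fun q hq q' hq' h ↦ ?_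
      · exact mem_Icc_one_floor.2 (mem_factorPairs.1 (mem_filter.1 hq).1).1
      · exact Prod.ext h ((mem_filter.1 hq).2.trans (mem_filter.1 hq').2.symm)
    exact (Nat.cast_le.2 hcard).trans (card_Icc_one_floor_le hM)
  · rw [Nat.cast_nonpos, card_eq_zero, filter_eq_empty_iff]
    rintro ⟨m, z⟩ hq (rfl : z = 0)
    have hmod := (mem_factorPairs.1 hq).2.2
    rw [mul_zero] at hmod
    exact hY (Int.modEq_zero_iff_dvd.1 hmod.symm)

lemma card_factorPairs_le {D : ℝ} (hp : 0 < p) (hM : 0 ≤ M) (hV : 0 ≤ V) (hD₀ : 0 ≤ D)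
    (hD : ∀ n : ℕ, n ≠ 0 → (n : ℝ) ≤ V → (#n.divisors : ℝ) ≤ D) :
    (#(factorPairs p M V Y) : ℝ) ≤ D * (2 * V / p + 1) + if (p : ℤ) ∣ Y then M else 0 := by
  rw [← card_filter_add_card_filter_not (fun q ↦ q.2 ≠ 0), Nat.cast_add]
  simp only [not_not]
  exact add_le_add (card_factorPairs_snd_ne_zero_le hp hV hD₀ hD)
    (card_factorPairs_snd_eq_zero_le hM)

end FactorPairs

section PairSets

variable {p : ℕ} {T : Finset (ℕ × ℤ)} {K L : ℝ}

lemma card_le_of_snd_modEq (hp : 0 < p) (hK : 0 ≤ K) (hL : 0 ≤ L)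
    (hT : T ⊆ Icc 1 ⌊K⌋₊ ×ˢ Icc (-⌊L⌋) ⌊L⌋)
    (hmod : ∀ s ∈ T, ∀ t ∈ T, s.1 = t.1 → s.2 ≡ t.2 [ZMOD p]) :
    (#T : ℝ) ≤ (2 * L / p + 1) * K := by
  have hfiber : ∀ k ∈ Icc 1 ⌊K⌋₊, (#{t ∈ T | t.1 = k} : ℝ) ≤ (L - -L) / p + 1 := by
    intro k _
    rw [← card_image_of_injOn (f := Prod.snd) fun s hs t ht h ↦
      Prod.ext ((mem_filter.1 hs).2.trans (mem_filter.1 ht).2.symm) h]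
    refine card_le_of_pairwise_modEq hp (by linarith)
      (forall_mem_image.2 fun t ht ↦ abs_le.1 ?_)
      (forall_mem_image.2 fun s hs ↦ forall_mem_image.2 fun t ht ↦ ?_)
    · exact mem_Icc_neg_floor.1 (mem_product.1 (hT (mem_filter.1 ht).1)).2
    · obtain ⟨hsT, hsk⟩ := mem_filter.1 hs
      obtain ⟨htT, htk⟩ := mem_filter.1 ht
      exact hmod s hsT t htT (hsk.trans htk.symm)
  calc (#T : ℝ) ≤ ((L - -L) / p + 1) * #(Icc 1 ⌊K⌋₊) :=
        card_le_mul_card_of_fiber_le (fun t ht ↦ (mem_product.1 (hT ht)).1) hfiber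
    _ ≤ (2 * L / p + 1) * K := by
        rw [sub_neg_eq_add, ← two_mul]
        gcongr
        exact card_Icc_one_floor_le hK

lemma card_le_of_fst_modEq_of_snd_modEq (hp : 0 < p) (hK : 0 ≤ K) (hL : 0 ≤ L)
    (hT : T ⊆ Icc 1 ⌊K⌋₊ ×ˢ Icc (-⌊L⌋) ⌊L⌋)
    (hfst : ∀ s ∈ T, ∀ t ∈ T, (s.1 : ℤ) ≡ t.1 [ZMOD p])
    (hsnd : ∀ s ∈ T, ∀ t ∈ T, s.2 ≡ t.2 [ZMOD p]) :
    (#T : ℝ) ≤ (K / p + 1) * (2 * L / p + 1) := by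
  have hcard : #T ≤ #(T.image fun t ↦ (t.1 : ℤ)) * #(T.image Prod.snd) := by
    rw [← card_product]
    refine card_le_card_of_injOn (fun t ↦ ((t.1 : ℤ), t.2)) (fun t ht ↦ ?_) fun s _ t _ h ↦ ?_
    · exact mem_product.2 ⟨mem_image_of_mem _ ht, mem_image_of_mem _ ht⟩
    · simpa [Prod.ext_iff] using h
  have hcard_fst : (#(T.image fun t ↦ (t.1 : ℤ)) : ℝ) ≤ (K - 0) / p + 1 := by
    refine card_le_of_pairwise_modEq hp hK (forall_mem_image.2 fun t ht ↦ ?_)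
      (forall_mem_image.2 fun s hs ↦ forall_mem_image.2 fun t ht ↦ hfst s hs t ht)
    exact ⟨by simp, mod_cast (mem_Icc_one_floor.1 (mem_product.1 (hT ht)).1).2⟩
  have hcard_snd : (#(T.image Prod.snd) : ℝ) ≤ (L - -L) / p + 1 :=
    card_le_of_pairwise_modEq hp (by linarith)
      (forall_mem_image.2 fun t ht ↦ abs_le.1 (mem_Icc_neg_floor.1 (mem_product.1 (hT ht)).2))
      (forall_mem_image.2 fun s hs ↦ forall_mem_image.2 fun t ht ↦ hsnd s hs t ht)
  calc (#T : ℝ) ≤ #(T.image fun t ↦ (t.1 : ℤ)) * #(T.image Prod.snd) := mod_cast hcard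
    _ ≤ ((K - 0) / p + 1) * ((L - -L) / p + 1) := by gcongr
    _ = (K / p + 1) * (2 * L / p + 1) := by ring

end PairSets

lemma eq_and_eq_of_linear_system {R : Type*} [CommRing R] [IsDomain R]
    {a b m₁ m₂ x y x' y' : R} (ha : a ≠ 0) (hb : b ≠ 0) (hm : m₁ ≠ m₂)
    (h₁ : a * x + b * m₁ * y = a * x' + b * m₁ * y')
    (h₂ : a * x + b * m₂ * y = a * x' + b * m₂ * y') : x = x' ∧ y = y' := by
  have hy : y = y' := mul_left_cancel₀ (mul_ne_zero hb (sub_ne_zero.2 hm))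
    (by linear_combination h₁ - h₂)
  exact ⟨mul_left_cancel₀ ha (by linear_combination h₁ - b * m₁ * hy), hy⟩

/-- The congruence of the theorem for a single index `i = 1, 2`, including its non-vanishing, as a
relation between `(k, n, u', m')` and `(k', n', u, m)`: the count fixes the first quadruple. -/
def LinkedMod (p : ℕ) (a b k n u' m' k' n' u m : ℤ) : Prop :=
  (a * k + b * m * n) * m' * u' ≡ (a * k' + b * m' * n') * m * u [ZMOD p] ∧
    ¬ (a * k + b * m * n) * m' * u' ≡ 0 [ZMOD p]

instance (p : ℕ) (a b k n u' m' k' n' u m : ℤ) :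
    Decidable (LinkedMod p a b k n u' m' k' n' u m) :=
  inferInstanceAs (Decidable (_ ∧ _))

/-- The cofactor of `m` in the congruence `LinkedMod`, once `b m n m' u'` has been moved to the
side that is divisible by `m`. -/
def cofactor (a b n u' m' k' n' u : ℤ) : ℤ :=
  (a * k' + b * m' * n') * u - b * m' * n * u'

section LinkedMod

variable {p : ℕ} {a b k n u' m' k' n' u m k'' n'' : ℤ}

lemma LinkedMod.mul_cofactor_modEq (h : LinkedMod p a b k n u' m' k' n' u m) :
    m * cofactor a b n u' m' k' n' u ≡ a * k * u' * m' [ZMOD p] := by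
  have hmod := h.1.symm.sub_right (b * m * n * m' * u')
  unfold cofactor
  convert hmod using 1 <;> ring

variable [Fact p.Prime]

lemma linkedMod_iff_zmod :
    LinkedMod p a b k n u' m' k' n' u m ↔
      ((a * k + b * m * n) * m' * u' : ZMod p) = (a * k' + b * m' * n') * m * u ∧
        ((a * k + b * m * n) * m' * u' : ZMod p) ≠ 0 := by
  simp only [LinkedMod, ← ZMod.intCast_eq_intCast_iff, Int.cast_mul, Int.cast_add, Int.cast_zero,
    ne_eq]

lemma LinkedMod.zmod_ne_zero (h : LinkedMod p a b k n u' m' k' n' u m) :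
    ((u' : ZMod p) ≠ 0 ∧ (m' : ZMod p) ≠ 0) ∧ (u : ZMod p) ≠ 0 ∧ (m : ZMod p) ≠ 0 := by
  obtain ⟨heq, hne⟩ := linkedMod_iff_zmod.1 h
  have hne' := heq ▸ hne
  exact ⟨⟨right_ne_zero_of_mul hne, right_ne_zero_of_mul (left_ne_zero_of_mul hne)⟩,
    right_ne_zero_of_mul hne', right_ne_zero_of_mul (left_ne_zero_of_mul hne')⟩

lemma LinkedMod.form_eq (h : LinkedMod p a b k n u' m' k' n' u m)
    (h' : LinkedMod p a b k n u' m' k'' n'' u m) :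
    (a * k' + b * m' * n' : ZMod p) = a * k'' + b * m' * n'' := by
  obtain ⟨hu, hm⟩ := h.zmod_ne_zero.2
  have heq := (linkedMod_iff_zmod.1 h).1.symm.trans (linkedMod_iff_zmod.1 h').1
  exact mul_right_cancel₀ hm (mul_right_cancel₀ hu heq)

lemma LinkedMod.snd_modEq (hb : ¬ (p : ℤ) ∣ b) (h : LinkedMod p a b k n u' m' k' n' u m)
    (h' : LinkedMod p a b k n u' m' k' n'' u m) : n' ≡ n'' [ZMOD p] := by
  rw [← ZMod.intCast_zmod_eq_zero_iff_dvd] at hb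
  rw [← ZMod.intCast_eq_intCast_iff]
  exact mul_left_cancel₀ (mul_ne_zero hb h.zmod_ne_zero.1.2) (add_left_cancel (h.form_eq h'))

lemma LinkedMod.fst_modEq_and_snd_modEq {m₁ m₂ m₁' m₂' : ℤ} (ha : ¬ (p : ℤ) ∣ a)
    (hb : ¬ (p : ℤ) ∣ b) (hm : ¬ m₁' ≡ m₂' [ZMOD p])
    (h₁ : LinkedMod p a b k n u' m₁' k' n' u m₁) (h₁' : LinkedMod p a b k n u' m₁' k'' n'' u m₁)
    (h₂ : LinkedMod p a b k n u' m₂' k' n' u m₂) (h₂' : LinkedMod p a b k n u' m₂' k'' n'' u m₂) :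
    k' ≡ k'' [ZMOD p] ∧ n' ≡ n'' [ZMOD p] := by
  rw [← ZMod.intCast_zmod_eq_zero_iff_dvd] at ha hb
  simp only [← ZMod.intCast_eq_intCast_iff] at hm ⊢
  exact eq_and_eq_of_linear_system ha hb hm (h₁.form_eq h₁') (h₂.form_eq h₂')

lemma LinkedMod.dvd_of_dvd_mul (ha : ¬ (p : ℤ) ∣ a) (h : LinkedMod p a b k n u' m' k' n' u m)
    (hY : (p : ℤ) ∣ a * k * u' * m') : (p : ℤ) ∣ k := by
  rw [← ZMod.intCast_zmod_eq_zero_iff_dvd] at ha hY ⊢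
  obtain ⟨hu', hm'⟩ := h.zmod_ne_zero.1
  simpa [ha, hu', hm'] using hY

end LinkedMod

/-- Both congruences of the theorem together with `m₁' ≠ m₂'`, as a relation between the data
`((k, n), (u', m₁', m₂'))` that the count fixes and a completion `((k', n'), (u, m₁, m₂))`. -/
def DoublyLinkedMod (p : ℕ) (a b : ℤ) : (ℕ × ℤ) × ℕ × ℕ × ℕ → (ℕ × ℤ) × ℕ × ℕ × ℕ → Prop
  | ((k, n), (u', m₁', m₂')), ((k', n'), (u, m₁, m₂)) =>
    m₁' ≠ m₂' ∧ LinkedMod p a b k n u' m₁' k' n' u m₁ ∧ LinkedMod p a b k n u' m₂' k' n' u m₂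

instance (p : ℕ) (a b : ℤ) : DecidableRel (DoublyLinkedMod p a b) :=
  fun ⟨⟨_, _⟩, _, _, _⟩ ⟨⟨_, _⟩, _, _, _⟩ ↦ inferInstanceAs (Decidable (_ ∧ _ ∧ _))

/-- The ranges of the variables in either argument of `DoublyLinkedMod`. -/
noncomputable def tupleBox (K L M W : ℝ) : Finset ((ℕ × ℤ) × ℕ × ℕ × ℕ) :=
  (Icc 1 ⌊K⌋₊ ×ˢ Icc (-⌊L⌋) ⌊L⌋) ×ˢ Icc 1 ⌊W⌋₊ ×ˢ Icc 1 ⌊M⌋₊ ×ˢ Icc 1 ⌊M⌋₊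

/-- The completions of the fixed data `s` to a solution. -/
noncomputable def completions (p : ℕ) (a b : ℤ) (K L M W : ℝ) (s : (ℕ × ℤ) × ℕ × ℕ × ℕ) :
    Finset ((ℕ × ℤ) × ℕ × ℕ × ℕ) :=
  {t ∈ tupleBox K L M W | DoublyLinkedMod p a b s t}

/-- The pairs `(k', n')` which, for given `y = (u, m₁, m₂)`, complete the fixed data `s`. -/
noncomputable def completionSlice (p : ℕ) (a b : ℤ) (K L : ℝ) (s : (ℕ × ℤ) × ℕ × ℕ × ℕ)
    (y : ℕ × ℕ × ℕ) : Finset (ℕ × ℤ) :=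
  {x ∈ Icc 1 ⌊K⌋₊ ×ˢ Icc (-⌊L⌋) ⌊L⌋ | DoublyLinkedMod p a b s (x, y)}

/-- The trivial bound for the linear forms `a k + b m n` of the theorem, see `abs_form_le`. -/
noncomputable def amplitude (a b : ℤ) (K L M : ℝ) : ℝ :=
  |(a : ℝ)| * K + |(b : ℝ)| * M * L

section Box

variable {K L M W : ℝ}

lemma mem_tupleBox {k u m₁ m₂ : ℕ} {n : ℤ} :
    ((k, n), (u, m₁, m₂)) ∈ tupleBox K L M W ↔
      ((1 ≤ k ∧ (k : ℝ) ≤ K) ∧ |(n : ℝ)| ≤ L) ∧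
        (1 ≤ u ∧ (u : ℝ) ≤ W) ∧ (1 ≤ m₁ ∧ (m₁ : ℝ) ≤ M) ∧ 1 ≤ m₂ ∧ (m₂ : ℝ) ≤ M := by
  simp only [tupleBox, mem_product, mem_Icc_one_floor, mem_Icc_neg_floor]

lemma card_tupleBox_le (hK : 0 ≤ K) (hL : 1 ≤ L) (hM : 0 ≤ M) (hW : 0 ≤ W) :
    (#(tupleBox K L M W) : ℝ) ≤ 3 * (K * L * W * M ^ 2) := by
  simp only [tupleBox, card_product, Nat.cast_mul]
  have hcard_K := card_Icc_one_floor_le hK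
  have hcard_L := card_Icc_neg_floor_le (zero_le_one.trans hL)
  have hcard_M := card_Icc_one_floor_le hM
  have hcard_W := card_Icc_one_floor_le hW
  calc _ ≤ K * (2 * L + 1) * (W * (M * M)) := by gcongr
    _ ≤ K * (3 * L) * (W * (M * M)) := by gcongr; linarith
    _ = 3 * (K * L * W * M ^ 2) := by ring

end Box

section Amplitude

variable {a b : ℤ} {K L M : ℝ}

lemma abs_form_le {k m n : ℤ} (hk : |(k : ℝ)| ≤ K) (hm : |(m : ℝ)| ≤ M) (hn : |(n : ℝ)| ≤ L) :
    |(a * k + b * m * n : ℝ)| ≤ amplitude a b K L M :=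
  calc |(a * k + b * m * n : ℝ)| ≤ |(a : ℝ)| * |(k : ℝ)| + |(b : ℝ)| * |(m : ℝ)| * |(n : ℝ)| := by
        simpa only [abs_mul] using abs_add_le (a * k : ℝ) (b * m * n)
    _ ≤ amplitude a b K L M := by
        have hM := (abs_nonneg _).trans hm
        unfold amplitude
        gcongr

lemma amplitude_nonneg (hK : 0 ≤ K) (hL : 0 ≤ L) (hM : 0 ≤ M) : 0 ≤ amplitude a b K L M := by
  unfold amplitude
  positivity

lemma le_amplitude (ha : a ≠ 0) (hK : 0 ≤ K) (hL : 0 ≤ L) (hM : 0 ≤ M) :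
    K ≤ amplitude a b K L M := by
  have ha' : (1 : ℝ) ≤ |(a : ℝ)| := mod_cast Int.one_le_abs ha
  exact (le_mul_of_one_le_left hK ha').trans (le_add_of_nonneg_right (by positivity))

lemma mul_le_amplitude (hb : b ≠ 0) (hK : 0 ≤ K) (hL : 0 ≤ L) (hM : 0 ≤ M) :
    M * L ≤ amplitude a b K L M := by
  have hb' : (1 : ℝ) ≤ |(b : ℝ)| := mod_cast Int.one_le_abs hb
  rw [amplitude, mul_assoc _ M L]
  exact (le_mul_of_one_le_left (by positivity) hb').trans (le_add_of_nonneg_left (by positivity))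

end Amplitude

section Completions

variable {p : ℕ} {a b : ℤ} {K L M W : ℝ} {s : (ℕ × ℤ) × ℕ × ℕ × ℕ} {y : ℕ × ℕ × ℕ}

lemma card_completions_eq_sum :
    #(completions p a b K L M W s) =
      ∑ y ∈ Icc 1 ⌊W⌋₊ ×ˢ Icc 1 ⌊M⌋₊ ×ˢ Icc 1 ⌊M⌋₊, #(completionSlice p a b K L s y) := by
  simp only [completions, completionSlice, tupleBox, card_filter, sum_product_right]

lemma card_completions_le_of_slice_le {B : ℝ} (hM : 0 ≤ M) (hW : 0 ≤ W) (hB₀ : 0 ≤ B)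
    (hB : ∀ y, (#(completionSlice p a b K L s y) : ℝ) ≤ B) :
    (#(completions p a b K L M W s) : ℝ) ≤ M ^ 2 * W * B := by
  rw [card_completions_eq_sum, Nat.cast_sum]
  have hcard_M := card_Icc_one_floor_le hM
  have hcard_W := card_Icc_one_floor_le hW
  calc _ ≤ #(Icc 1 ⌊W⌋₊ ×ˢ Icc 1 ⌊M⌋₊ ×ˢ Icc 1 ⌊M⌋₊) • B := sum_le_card_nsmul _ _ B fun y _ ↦ hB y
    _ = #(Icc 1 ⌊W⌋₊) * (#(Icc 1 ⌊M⌋₊) * #(Icc 1 ⌊M⌋₊)) * B := by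
        rw [nsmul_eq_mul, card_product, card_product, Nat.cast_mul, Nat.cast_mul]
    _ ≤ W * (M * M) * B := by gcongr
    _ = M ^ 2 * W * B := by ring

lemma card_completionSlice_le (hK : 0 ≤ K) (hL : 1 ≤ L) :
    (#(completionSlice p a b K L s y) : ℝ) ≤ 3 * L * K := by
  have hcard := card_le_of_snd_modEq one_pos hK (zero_le_one.trans hL)
    (T := completionSlice p a b K L s y) (filter_subset _ _) fun _ _ _ _ _ ↦ by simp [Int.modEq_one]
  refine hcard.trans (mul_le_mul_of_nonneg_right ?_ hK)
  rw [Nat.cast_one, div_one]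
  linarith

variable [Fact p.Prime]

lemma card_completionSlice_le_of_le (hb : ¬ (p : ℤ) ∣ b) (hK : 0 ≤ K) (hpL : p ≤ L) :
    (#(completionSlice p a b K L s y) : ℝ) ≤ 3 * L / p * K := by
  have hp : 0 < p := (Fact.out : p.Prime).pos
  have hcard := card_le_of_snd_modEq hp hK (p.cast_nonneg.trans hpL)
    (T := completionSlice p a b K L s y) (filter_subset _ _) ?_
  · have hLp : 1 ≤ L / p := (one_le_div (by positivity)).2 hpL
    refine hcard.trans (mul_le_mul_of_nonneg_right ?_ hK)
    rw [mul_div_assoc, mul_div_assoc]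
    linarith
  · rintro ⟨k', n'⟩ h ⟨_, n''⟩ h' (rfl : k' = _)
    exact (mem_filter.1 h).2.2.1.snd_modEq hb (mem_filter.1 h').2.2.1

lemma card_completionSlice_le_of_le_of_lt (ha : ¬ (p : ℤ) ∣ a) (hb : ¬ (p : ℤ) ∣ b)
    (hpK : p ≤ K) (hpL : p ≤ L) (hMp : M < p) (hs : s ∈ tupleBox K L M W) :
    (#(completionSlice p a b K L s y) : ℝ) ≤ 6 * L * K / p ^ 2 := by
  have hp : 0 < p := (Fact.out : p.Prime).pos
  obtain ⟨⟨k, n⟩, u', m₁', m₂'⟩ := s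
  obtain ⟨-, -, ⟨-, hm₁'⟩, -, hm₂'⟩ := mem_tupleBox.1 hs
  have hcongr : ∀ t ∈ completionSlice p a b K L ((k, n), (u', m₁', m₂')) y,
      ∀ t' ∈ completionSlice p a b K L ((k, n), (u', m₁', m₂')) y,
        (t.1 : ℤ) ≡ t'.1 [ZMOD p] ∧ t.2 ≡ t'.2 [ZMOD p] := by
    intro t h t' h'
    obtain ⟨hne, h₁, h₂⟩ := (mem_filter.1 h).2
    obtain ⟨-, h₁', h₂'⟩ := (mem_filter.1 h').2
    refine LinkedMod.fst_modEq_and_snd_modEq ha hb (fun hmod ↦ hne ?_) h₁ h₁' h₂ h₂'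
    exact (Int.natCast_modEq_iff.1 hmod).eq_of_lt_of_lt (mod_cast hm₁'.trans_lt hMp)
      (mod_cast hm₂'.trans_lt hMp)
  have hKp : 1 ≤ K / p := (one_le_div (by positivity)).2 hpK
  have hLp : 1 ≤ L / p := (one_le_div (by positivity)).2 hpL
  have hL : 0 ≤ L := p.cast_nonneg.trans hpL
  calc _ ≤ (K / p + 1) * (2 * L / p + 1) :=
        card_le_of_fst_modEq_of_snd_modEq hp (p.cast_nonneg.trans hpK) hL
          (filter_subset _ _) (fun t h t' h' ↦ (hcongr t h t' h').1)
          fun t h t' h' ↦ (hcongr t h t' h').2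
    _ ≤ (K / p + K / p) * (2 * L / p + L / p) := by gcongr
    _ = 6 * L * K / p ^ 2 := by ring

lemma exists_forall_card_completionSlice_le (ha : ¬ (p : ℤ) ∣ a) (hb : ¬ (p : ℤ) ∣ b)
    (hK : 1 ≤ K) (hL : 1 ≤ L) (hM : 1 ≤ M) (hW : 1 ≤ W) (hs : s ∈ tupleBox K L M W)
    (hlarge : K * L * p ^ 2 ≤ amplitude a b K L M ^ 2 * W ∨ p ≤ K ∧ p ≤ L) :
    ∃ B : ℝ, 0 ≤ B ∧ (∀ y, (#(completionSlice p a b K L s y) : ℝ) ≤ B) ∧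
      B * p ^ 2 ≤ 6 * (amplitude a b K L M ^ 2 * W) := by
  have hp : 0 < p := (Fact.out : p.Prime).pos
  have hKLM : K * (M * L) ≤ amplitude a b K L M ^ 2 := by
    have hKQ : K ≤ amplitude a b K L M :=
      le_amplitude (by rintro rfl; simp at ha) (by linarith) (by linarith) (by linarith)
    have hMLQ : M * L ≤ amplitude a b K L M :=
      mul_le_amplitude (by rintro rfl; simp at hb) (by linarith) (by linarith) (by linarith)
    rw [sq]
    gcongr
    linarith
  have hKLMW : K * (M * L) ≤ amplitude a b K L M ^ 2 * W :=
    hKLM.trans (le_mul_of_one_le_right (by positivity) hW)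
  rcases hlarge with hKLp | ⟨hpK, hpL⟩
  · refine ⟨3 * L * K, by positivity, fun y ↦ card_completionSlice_le (by linarith) hL, ?_⟩
    linarith [show 0 ≤ K * L * (p : ℝ) ^ 2 by positivity]
  rcases lt_or_ge M p with hMp | hpM
  · refine ⟨6 * L * K / p ^ 2, by positivity,
      fun y ↦ card_completionSlice_le_of_le_of_lt ha hb hpK hpL hMp hs, ?_⟩
    calc 6 * L * K / p ^ 2 * p ^ 2 = 6 * (K * (1 * L)) := by field_simp
      _ ≤ 6 * (K * (M * L)) := by gcongr
      _ ≤ 6 * (amplitude a b K L M ^ 2 * W) := by gcongr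
  · refine ⟨3 * L / p * K, by positivity,
      fun y ↦ card_completionSlice_le_of_le hb (by linarith) hpL, ?_⟩
    calc 3 * L / p * K * p ^ 2 = 3 * (K * (p * L)) := by field_simp
      _ ≤ 6 * (K * (M * L)) := by gcongr; norm_num
      _ ≤ 6 * (amplitude a b K L M ^ 2 * W) := by gcongr

lemma card_completions_le_of_large (ha : ¬ (p : ℤ) ∣ a) (hb : ¬ (p : ℤ) ∣ b)
    (hK : 1 ≤ K) (hL : 1 ≤ L) (hM : 1 ≤ M) (hW : 1 ≤ W) (hs : s ∈ tupleBox K L M W)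
    (hlarge : K * L * p ^ 2 ≤ amplitude a b K L M ^ 2 * W ∨ p ≤ K ∧ p ≤ L) :
    (#(completions p a b K L M W s) : ℝ) ≤ 6 * (amplitude a b K L M * M * W / p) ^ 2 := by
  have hp : 0 < p := (Fact.out : p.Prime).pos
  obtain ⟨B, hB₀, hB, hBp⟩ := exists_forall_card_completionSlice_le ha hb hK hL hM hW hs hlarge
  calc _ ≤ M ^ 2 * W * B := card_completions_le_of_slice_le (by linarith) (by linarith) hB₀ hB
    _ = M ^ 2 * W * (B * p ^ 2) / p ^ 2 := by field_simp
    _ ≤ M ^ 2 * W * (6 * (amplitude a b K L M ^ 2 * W)) / p ^ 2 := by gcongr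
    _ = 6 * (amplitude a b K L M * M * W / p) ^ 2 := by ring

end Completions

section Cofactors

variable {a b : ℤ} {K L M W : ℝ}

lemma abs_mul_cofactor_le {n u' m' k' n' u m : ℤ} (hn : |(n : ℝ)| ≤ L) (hu' : |(u' : ℝ)| ≤ W)
    (hm' : |(m' : ℝ)| ≤ M) (hk' : |(k' : ℝ)| ≤ K) (hn' : |(n' : ℝ)| ≤ L) (hu : |(u : ℝ)| ≤ W)
    (hm : |(m : ℝ)| ≤ M) :
    |((m * cofactor a b n u' m' k' n' u : ℤ) : ℝ)| ≤ 2 * (amplitude a b K L M * M * W) := by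
  have hform := abs_form_le (a := a) (b := b) hk' hm' hn'
  have hform₀ := abs_form_le (a := a) (b := b) (k := 0) (K := K)
    (by simpa using (abs_nonneg _).trans hk') hm' hn
  have hM := (abs_nonneg _).trans hm
  have hQ := (abs_nonneg _).trans hform
  calc |((m * cofactor a b n u' m' k' n' u : ℤ) : ℝ)|
      = |(m : ℝ)| * |(a * k' + b * m' * n' : ℝ) * u - (a * (0 : ℤ) + b * m' * n : ℝ) * u'| := by
        rw [← abs_mul, cofactor]; push_cast; ring_nf
    _ ≤ |(m : ℝ)| * (|(a * k' + b * m' * n' : ℝ)| * |(u : ℝ)| +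
          |(a * (0 : ℤ) + b * m' * n : ℝ)| * |(u' : ℝ)|) := by
        rw [← abs_mul _ (u : ℝ), ← abs_mul _ (u' : ℝ)]
        exact mul_le_mul_of_nonneg_left (abs_sub _ _) (abs_nonneg _)
    _ ≤ M * (amplitude a b K L M * W + amplitude a b K L M * W) := by gcongr
    _ = 2 * (amplitude a b K L M * M * W) := by ring

lemma mul_eq_mul_of_cofactor_eq {n u' m₁' m₂' k' n' u k'' n'' v : ℤ} (ha : a ≠ 0) (hb : b ≠ 0)
    (hm : m₁' ≠ m₂')
    (h₁ : cofactor a b n u' m₁' k' n' u = cofactor a b n u' m₁' k'' n'' v)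
    (h₂ : cofactor a b n u' m₂' k' n' u = cofactor a b n u' m₂' k'' n'' v) :
    k' * u = k'' * v ∧ n' * u = n'' * v := by
  unfold cofactor at h₁ h₂
  exact eq_and_eq_of_linear_system ha hb hm (by linear_combination h₁) (by linear_combination h₂)

/-- The variables `m₁` and `m₂` of a completion, each paired with its cofactor. -/
def cofactorPairs (a b : ℤ) :
    (ℕ × ℤ) × ℕ × ℕ × ℕ → (ℕ × ℤ) × ℕ × ℕ × ℕ → (ℕ × ℤ) × ℕ × ℤ
  | ((_, n), (u', m₁', m₂')), ((k', n'), (u, m₁, m₂)) =>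
    ((m₁, cofactor a b n u' m₁' k' n' u), (m₂, cofactor a b n u' m₂' k' n' u))

variable {p : ℕ}

lemma cofactorPairs_mem_product_factorPairs {k u' m₁' m₂' : ℕ} {n : ℤ} {t : (ℕ × ℤ) × ℕ × ℕ × ℕ}
    (hs : ((k, n), (u', m₁', m₂')) ∈ tupleBox K L M W)
    (ht : t ∈ completions p a b K L M W ((k, n), (u', m₁', m₂'))) :
    cofactorPairs a b ((k, n), (u', m₁', m₂')) t ∈
      factorPairs p M (2 * (amplitude a b K L M * M * W)) (a * k * u' * m₁') ×ˢ
        factorPairs p M (2 * (amplitude a b K L M * M * W)) (a * k * u' * m₂') := by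
  obtain ⟨⟨k', n'⟩, u, m₁, m₂⟩ := t
  obtain ⟨ht, -, h₁, h₂⟩ := mem_filter.1 ht
  obtain ⟨⟨-, hn⟩, ⟨-, hu'⟩, ⟨-, hm₁'⟩, -, hm₂'⟩ := mem_tupleBox.1 hs
  obtain ⟨⟨⟨-, hk'⟩, hn'⟩, ⟨-, hu⟩, hm₁, hm₂⟩ := mem_tupleBox.1 ht
  refine mem_product.2 ⟨mem_factorPairs.2 ⟨hm₁, ?_, h₁.mul_cofactor_modEq⟩,
    mem_factorPairs.2 ⟨hm₂, ?_, h₂.mul_cofactor_modEq⟩⟩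
  · exact abs_mul_cofactor_le hn (by simpa) (by simpa) (by simpa) hn' (by simpa)
      (by simpa using hm₁.2)
  · exact abs_mul_cofactor_le hn (by simpa) (by simpa) (by simpa) hn' (by simpa)
      (by simpa using hm₂.2)

-- The cofactors determine `k' * u` and `n' * u`, so all that is left to choose is a divisor `u`.
lemma card_completions_filter_cofactorPairs_le {D : ℝ} (ha : a ≠ 0) (hb : b ≠ 0)
    {s t₀ : (ℕ × ℤ) × ℕ × ℕ × ℕ}
    (hD : ∀ n : ℕ, n ≠ 0 → (n : ℝ) ≤ K * W → (#n.divisors : ℝ) ≤ D)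
    (ht₀ : t₀ ∈ completions p a b K L M W s) :
    (#{t ∈ completions p a b K L M W s | cofactorPairs a b s t = cofactorPairs a b s t₀} : ℝ) ≤
      D := by
  obtain ⟨⟨k, n⟩, u', m₁', m₂'⟩ := s
  obtain ⟨⟨k₀, n₀⟩, u₀, m₁, m₂⟩ := t₀
  obtain ⟨ht₀, hne, -⟩ := mem_filter.1 ht₀
  obtain ⟨⟨⟨hk₀, hk₀K⟩, -⟩, ⟨hu₀, hu₀W⟩, -⟩ := mem_tupleBox.1 ht₀
  set F := {t ∈ completions p a b K L M W ((k, n), (u', m₁', m₂')) |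
    cofactorPairs a b ((k, n), (u', m₁', m₂')) t =
      cofactorPairs a b ((k, n), (u', m₁', m₂')) ((k₀, n₀), (u₀, m₁, m₂))}
  have hF : ∀ t ∈ F, (1 ≤ t.2.1 ∧ t.2.2 = (m₁, m₂)) ∧ t.1.1 * t.2.1 = k₀ * u₀ ∧
      t.1.2 * t.2.1 = n₀ * u₀ := by
    rintro ⟨⟨k', n'⟩, u, l₁, l₂⟩ ht
    obtain ⟨ht, hpairs⟩ := mem_filter.1 ht
    have htu := (mem_tupleBox.1 (mem_filter.1 ht).1).2.1.1
    simp only [cofactorPairs, Prod.mk.injEq] at hpairs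
    obtain ⟨⟨rfl, h₁⟩, rfl, h₂⟩ := hpairs
    have hprod := mul_eq_mul_of_cofactor_eq ha hb (mod_cast hne) h₁ h₂
    exact ⟨⟨htu, rfl⟩, mod_cast hprod.1, hprod.2⟩
  have hcard : #F ≤ #(k₀ * u₀).divisors := by
    refine card_le_card_of_injOn (fun t ↦ t.2.1) (fun t ht ↦ ?_) ?_
    · exact Nat.mem_divisors.2 ⟨Dvd.intro_left _ (hF t ht).2.1, by positivity⟩
    · rintro ⟨⟨k', n'⟩, u, l⟩ ht ⟨⟨k'', n''⟩, _, l'⟩ ht' (rfl : u = _)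
      obtain ⟨⟨hu, rfl⟩, hk, hn⟩ := hF _ ht
      obtain ⟨⟨-, rfl⟩, hk', hn'⟩ := hF _ ht'
      have hu₀ : (u : ℤ) ≠ 0 := mod_cast Nat.one_le_iff_ne_zero.1 hu
      obtain rfl : k' = k'' := Nat.eq_of_mul_eq_mul_right hu (hk.trans hk'.symm)
      obtain rfl : n' = n'' := mul_right_cancel₀ hu₀ (hn.trans hn'.symm)
      rfl
  calc (#F : ℝ) ≤ #(k₀ * u₀).divisors := mod_cast hcard
    _ ≤ D := hD _ (by positivity) (by
        rw [Nat.cast_mul]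
        exact mul_le_mul hk₀K hu₀W u₀.cast_nonneg (k₀.cast_nonneg.trans hk₀K))

lemma card_factorPairs_le_of_linkedMod [Fact p.Prime] {D : ℝ} {k : ℕ} {n u' m' k' n' u m : ℤ}
    (ha : ¬ (p : ℤ) ∣ a) (hk₀ : 1 ≤ k) (hkK : (k : ℝ) ≤ K) (hL : 0 ≤ L) (hM : 0 ≤ M) (hW : 1 ≤ W)
    (hD : ∀ n : ℕ, n ≠ 0 → (n : ℝ) ≤ 2 * (amplitude a b K L M * M * W) → (#n.divisors : ℝ) ≤ D)
    (hD₁ : 1 ≤ D) (h : LinkedMod p a b k n u' m' k' n' u m) :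
    (#(factorPairs p M (2 * (amplitude a b K L M * M * W)) (a * k * u' * m')) : ℝ) ≤
      5 * D * (1 + amplitude a b K L M * M * W / p) := by
  have hp : 0 < p := (Fact.out : p.Prime).pos
  have hK : 0 ≤ K := k.cast_nonneg.trans hkK
  have hKQ : K ≤ amplitude a b K L M := le_amplitude (by rintro rfl; simp at ha) hK hL hM
  have hQ : 0 ≤ amplitude a b K L M := hK.trans hKQ
  set X := amplitude a b K L M * M * W / p with hX
  have hX₀ : 0 ≤ X := by positivity
  have hzero : (if (p : ℤ) ∣ a * k * u' * m' then M else 0) ≤ X := by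
    split_ifs with hY
    · have hpk : p ≤ k := Nat.le_of_dvd hk₀ (mod_cast h.dvd_of_dvd_mul ha hY)
      have hpQ : p ≤ amplitude a b K L M := (Nat.cast_le.2 hpk).trans (hkK.trans hKQ)
      rw [hX, le_div_iff₀ (by positivity), mul_comm M]
      calc p * M = p * M * 1 := (mul_one _).symm
        _ ≤ amplitude a b K L M * M * W := by gcongr
    · exact hX₀
  calc _ ≤ D * (2 * (2 * (amplitude a b K L M * M * W)) / p + 1) + X :=
        (card_factorPairs_le hp hM (by positivity) (by linarith) hD).trans (by gcongr)
    _ = D * (4 * X + 1) + 1 * X := by ring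
    _ ≤ D * (4 * X + 1) + D * X := by gcongr
    _ ≤ 5 * D * (1 + X) := by linarith

lemma card_image_cofactorPairs_le [Fact p.Prime] {D : ℝ} {s : (ℕ × ℤ) × ℕ × ℕ × ℕ}
    (ha : ¬ (p : ℤ) ∣ a) (hL : 0 ≤ L) (hM : 0 ≤ M) (hW : 1 ≤ W)
    (hD : ∀ n : ℕ, n ≠ 0 → (n : ℝ) ≤ 2 * (amplitude a b K L M * M * W) → (#n.divisors : ℝ) ≤ D)
    (hD₁ : 1 ≤ D) (hs : s ∈ tupleBox K L M W) :
    (#((completions p a b K L M W s).image (cofactorPairs a b s)) : ℝ) ≤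
      (5 * D * (1 + amplitude a b K L M * M * W / p)) ^ 2 := by
  rcases (completions p a b K L M W s).eq_empty_or_nonempty with hempty | ⟨t₀, ht₀⟩
  · rw [hempty, image_empty, card_empty, Nat.cast_zero]
    positivity
  obtain ⟨⟨k, n⟩, u', m₁', m₂'⟩ := s
  obtain ⟨⟨k', n'⟩, u, m₁, m₂⟩ := t₀
  obtain ⟨-, -, h₁, h₂⟩ := mem_filter.1 ht₀
  obtain ⟨⟨hk, hkK⟩, -⟩ := (mem_tupleBox.1 hs).1
  let P (m' : ℕ) := factorPairs p M (2 * (amplitude a b K L M * M * W)) (a * k * u' * m')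
  have hP₁ : (#(P m₁') : ℝ) ≤ 5 * D * (1 + amplitude a b K L M * M * W / p) :=
    card_factorPairs_le_of_linkedMod ha hk hkK hL hM hW hD hD₁ h₁
  have hP₂ : (#(P m₂') : ℝ) ≤ 5 * D * (1 + amplitude a b K L M * M * W / p) :=
    card_factorPairs_le_of_linkedMod ha hk hkK hL hM hW hD hD₁ h₂
  calc _ ≤ (#(P m₁' ×ˢ P m₂') : ℝ) :=
        mod_cast card_le_card
          (image_subset_iff.2 fun t ht ↦ cofactorPairs_mem_product_factorPairs hs ht)
    _ = #(P m₁') * #(P m₂') := by rw [card_product, Nat.cast_mul]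
    _ ≤ (5 * D * (1 + amplitude a b K L M * M * W / p)) ^ 2 := by
        rw [sq]
        exact mul_le_mul hP₁ hP₂ (Nat.cast_nonneg _) ((Nat.cast_nonneg _).trans hP₁)

lemma card_completions_le_of_card_divisors_le [Fact p.Prime] {D : ℝ} {s : (ℕ × ℤ) × ℕ × ℕ × ℕ}
    (ha : ¬ (p : ℤ) ∣ a) (hb : ¬ (p : ℤ) ∣ b) (hK : 0 ≤ K) (hL : 0 ≤ L) (hM : 1 ≤ M) (hW : 1 ≤ W)
    (hD : ∀ n : ℕ, n ≠ 0 → (n : ℝ) ≤ 2 * (amplitude a b K L M * M * W) → (#n.divisors : ℝ) ≤ D)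
    (hD₁ : 1 ≤ D) (hs : s ∈ tupleBox K L M W) :
    (#(completions p a b K L M W s) : ℝ) ≤
      25 * D ^ 3 * (1 + amplitude a b K L M * M * W / p) ^ 2 := by
  have ha₀ : a ≠ 0 := by rintro rfl; simp at ha
  have hb₀ : b ≠ 0 := by rintro rfl; simp at hb
  have hKQ : K ≤ amplitude a b K L M := le_amplitude ha₀ hK hL (by linarith)
  have hKW : K * W ≤ 2 * (amplitude a b K L M * M * W) :=
    calc K * W = 1 * (K * 1 * W) := by ring
      _ ≤ 2 * (amplitude a b K L M * M * W) := by gcongr <;> linarith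
  set T := completions p a b K L M W s
  have hfiber : ∀ q ∈ T.image (cofactorPairs a b s),
      (#{t ∈ T | cofactorPairs a b s t = q} : ℝ) ≤ D :=
    forall_mem_image.2 fun t ht ↦ card_completions_filter_cofactorPairs_le ha₀ hb₀
      (fun j hj hjKW ↦ hD j hj (hjKW.trans hKW)) ht
  calc (#T : ℝ) ≤ D * #(T.image (cofactorPairs a b s)) :=
        card_le_mul_card_of_fiber_le (fun _ ↦ mem_image_of_mem _) hfiber
    _ ≤ D * (5 * D * (1 + amplitude a b K L M * M * W / p)) ^ 2 := by
        gcongr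
        exact card_image_cofactorPairs_le ha hL (by linarith) hW hD hD₁ hs
    _ = 25 * D ^ 3 * (1 + amplitude a b K L M * M * W / p) ^ 2 := by ring

end Cofactors

lemma amplitude_mul_mul_le_of_lt {a b : ℤ} {K L M W : ℝ} {p : ℕ} (ha : a ≠ 0) (hb : b ≠ 0)
    (hK : 1 ≤ K) (hL : 1 ≤ L) (hM : 1 ≤ M) (hW : 1 ≤ W)
    (hlt : amplitude a b K L M ^ 2 * W < K * L * p ^ 2) (hKL : p ≤ K → L < p) :
    amplitude a b K L M * M * W ≤ p ^ 6 := by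
  have hKQ : K ≤ amplitude a b K L M := le_amplitude ha (by linarith) (by linarith) (by linarith)
  have hMLQ : M * L ≤ amplitude a b K L M :=
    mul_le_amplitude hb (by linarith) (by linarith) (by linarith)
  have hMQ : M ≤ amplitude a b K L M := (le_mul_of_one_le_right (by linarith) hL).trans hMLQ
  have hLQ : L ≤ amplitude a b K L M := (le_mul_of_one_le_left (by linarith) hM).trans hMLQ
  set Q := amplitude a b K L M
  have hQ : 0 < Q := by linarith
  have hsq : Q * Q ≤ K * L * p ^ 2 := by
    rw [← sq]
    exact (le_mul_of_one_le_right (by positivity) hW).trans hlt.le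
  have hKle : K ≤ L * p ^ 2 := le_of_mul_le_mul_left
    (calc K * K ≤ Q * Q := by gcongr
      _ ≤ K * (L * p ^ 2) := by rwa [← mul_assoc]) (by linarith)
  have hLle : L ≤ K * p ^ 2 := le_of_mul_le_mul_left
    (calc L * L ≤ Q * Q := by gcongr
      _ ≤ L * (K * p ^ 2) := by rwa [← mul_assoc, mul_comm L]) (by linarith)
  have hKLp : K * L ≤ (p : ℝ) ^ 4 := by
    rcases lt_or_ge K p with hKp | hpK
    · calc K * L ≤ p * (p * p ^ 2) := by gcongr; exact hLle.trans (by gcongr)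
        _ = (p : ℝ) ^ 4 := by ring
    · have hLp := hKL hpK
      calc K * L ≤ (p * p ^ 2) * p := by gcongr; exact hKle.trans (by gcongr)
        _ = (p : ℝ) ^ 4 := by ring
  calc Q * M * W ≤ Q * Q * W := by gcongr
    _ = Q ^ 2 * W := by ring
    _ ≤ p ^ 4 * p ^ 2 := hlt.le.trans (by gcongr)
    _ = p ^ 6 := by ring

theorem exists_card_completions_le {ε : ℝ} (hε : 0 < ε) :
    ∃ C : ℝ, 0 < C ∧ ∀ (p : ℕ) [Fact p.Prime] (a b : ℤ), ¬ (p : ℤ) ∣ a → ¬ (p : ℤ) ∣ b →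
      ∀ K L M W : ℝ, 1 ≤ K → 1 ≤ L → 1 ≤ M → 1 ≤ W → ∀ s ∈ tupleBox K L M W,
        (#(completions p a b K L M W s) : ℝ) ≤
          C * p ^ ε * (1 + amplitude a b K L M * M * W / p) ^ 2 := by
  obtain ⟨C₀, hC₀, hdiv⟩ :=
    exists_card_divisors_le_mul_rpow_of_le_pow (show 0 < ε / 3 by positivity) (show 0 < 7 by simp)
  refine ⟨25 * C₀ ^ 3, by positivity, fun p _ a b ha hb K L M W hK hL hM hW s hs ↦ ?_⟩
  have hp : (2 : ℝ) ≤ p := mod_cast (Fact.out : p.Prime).two_le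
  have hcube : C₀ ^ 3 * (p : ℝ) ^ ε = (C₀ * (p : ℝ) ^ (ε / 3)) ^ 3 := by
    rw [mul_pow, ← Real.rpow_mul_natCast p.cast_nonneg]
    norm_num
  rw [mul_assoc 25, hcube]
  set D := C₀ * (p : ℝ) ^ (ε / 3)
  have hD₁ : 1 ≤ D :=
    one_le_mul_of_one_le_of_one_le hC₀ (Real.one_le_rpow (by linarith) (by positivity))
  by_cases hlarge : K * L * p ^ 2 ≤ amplitude a b K L M ^ 2 * W ∨ p ≤ K ∧ p ≤ L
  · have hQ : 0 ≤ amplitude a b K L M :=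
      amplitude_nonneg (by linarith) (by linarith) (by linarith)
    calc _ ≤ 6 * (amplitude a b K L M * M * W / p) ^ 2 :=
          card_completions_le_of_large ha hb hK hL hM hW hs hlarge
      _ ≤ 25 * D ^ 3 * (1 + amplitude a b K L M * M * W / p) ^ 2 := by
          gcongr
          · linarith [one_le_pow₀ hD₁ (n := 3)]
          · exact le_add_of_nonneg_left zero_le_one
  · rw [not_or, not_le, not_and, not_le] at hlarge
    have hV : amplitude a b K L M * M * W ≤ p ^ 6 :=
      amplitude_mul_mul_le_of_lt (by rintro rfl; simp at ha) (by rintro rfl; simp at hb) hK hL hM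
        hW hlarge.1 hlarge.2
    refine card_completions_le_of_card_divisors_le ha hb (by linarith) (by linarith) hM hW
      (fun n hn hnV ↦ hdiv p.cast_nonneg hn ?_) hD₁ hs
    calc (n : ℝ) ≤ 2 * p ^ 6 := hnV.trans (by gcongr)
      _ ≤ p * p ^ 6 := by gcongr
      _ = p ^ 7 := by ring

theorem counting_J2_general {ε : ℝ} (hε : 0 < ε) :
    ∃ C : ℝ, 0 < C ∧ ∀ (p : ℕ), p.Prime → ∀ (a b : ℤ), ¬ (p : ℤ) ∣ a * b →
      ∀ (K L M W : ℝ), 1 ≤ K → 1 ≤ L → 1 ≤ M → 1 ≤ W →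
        (#{q ∈ tupleBox K L M W ×ˢ tupleBox K L M W | DoublyLinkedMod p a b q.1 q.2} : ℝ) ≤
          C * p ^ ε * (K * L * W * M ^ 2 * (1 + amplitude a b K L M * M * W / p) ^ 2) := by
  obtain ⟨C, hC, hcompletions⟩ := exists_card_completions_le hε
  refine ⟨3 * C, by positivity, fun p hp a b hab K L M W hK hL hM hW ↦ ?_⟩
  have : Fact p.Prime := ⟨hp⟩
  have ha : ¬ (p : ℤ) ∣ a := fun h ↦ hab (h.mul_right b)
  have hb : ¬ (p : ℤ) ∣ b := fun h ↦ hab (h.mul_left a)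
  set B := C * (p : ℝ) ^ ε * (1 + amplitude a b K L M * M * W / p) ^ 2 with hB
  calc _ = ∑ s ∈ tupleBox K L M W, (#(completions p a b K L M W s) : ℝ) := by
        simp only [completions, card_filter, sum_product, Nat.cast_sum]
    _ ≤ #(tupleBox K L M W) • B :=
        sum_le_card_nsmul _ _ _ (hcompletions p a b ha hb K L M W hK hL hM hW)
    _ ≤ 3 * (K * L * W * M ^ 2) * B := by
        rw [nsmul_eq_mul]
        gcongr
        exact card_tupleBox_le (by linarith) hL (by linarith) (by linarith)
    _ = _ := by rw [hB]; ring

lemma mul_one_add_amplitude_sq_le {a b : ℤ} {K M N U c q : ℝ} {p : ℕ} (hcq : 0 ≤ c * q)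
    (hK : 0 ≤ K) (hM : 0 ≤ M) (hN : 0 ≤ N) (hU : 0 ≤ U) :
    c * q * (K * (2 * N) * (2 * U) * M ^ 2 *
        (1 + amplitude a b K (2 * N) M * M * (2 * U) / p) ^ 2) ≤
      16 * c * q * (K * N * U * (K + M ^ 2) *
        (1 + (|(a : ℝ)| * K + 2 * |(b : ℝ)| * M * N) * M * U / p) ^ 2) := by
  have hX : amplitude a b K (2 * N) M * M * (2 * U) / p =
      2 * ((|(a : ℝ)| * K + 2 * |(b : ℝ)| * M * N) * M * U / p) := by
    unfold amplitude
    ring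
  have hX₀ : 0 ≤ (|(a : ℝ)| * K + 2 * |(b : ℝ)| * M * N) * M * U / p := by positivity
  rw [hX]
  set X := (|(a : ℝ)| * K + 2 * |(b : ℝ)| * M * N) * M * U / p
  calc c * q * (K * (2 * N) * (2 * U) * M ^ 2 * (1 + 2 * X) ^ 2)
      ≤ c * q * (K * (2 * N) * (2 * U) * (K + M ^ 2) * (2 * (1 + X)) ^ 2) := by
        gcongr <;> linarith
    _ = 16 * c * q * (K * N * U * (K + M ^ 2) * (1 + X) ^ 2) := by ring

open Classical in
/-- Lemma 5.1 (the counting bound for `𝒥₂` in the proof of Theorem 2.5). -/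
theorem counting_J2 (ε : ℝ) (hε : 0 < ε) :
    ∃ C : ℝ, 0 < C ∧ ∀ (p : ℕ), p.Prime →
      ∀ (a b : ℤ), ¬ ((p : ℤ) ∣ a * b) →
      ∀ (K M N U : ℝ), 1 ≤ K → 1 ≤ M → 1 ≤ N → 1 ≤ U →
      (∑ k ∈ Icc 1 ⌊K⌋₊, ∑ k' ∈ Icc 1 ⌊K⌋₊,
        ∑ m₁ ∈ Icc 1 ⌊M⌋₊, ∑ m₁' ∈ Icc 1 ⌊M⌋₊, ∑ m₂ ∈ Icc 1 ⌊M⌋₊, ∑ m₂' ∈ Icc 1 ⌊M⌋₊,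
        ∑ n ∈ Finset.Icc (-⌊(2 * N : ℝ)⌋) ⌊(2 * N : ℝ)⌋,
        ∑ n' ∈ Finset.Icc (-⌊(2 * N : ℝ)⌋) ⌊(2 * N : ℝ)⌋,
        ∑ u ∈ Ioc ⌊U⌋₊ ⌊2 * U⌋₊, ∑ u' ∈ Ioc ⌊U⌋₊ ⌊2 * U⌋₊,
          if m₁ ≠ m₂ ∧ m₁' ≠ m₂' ∧
              ((a * k + b * m₁ * n) * m₁' * u' ≡ (a * k' + b * m₁' * n') * m₁ * u
                [ZMOD (p : ℤ)]) ∧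
              ¬ ((a * k + b * m₁ * n) * m₁' * u' ≡ 0 [ZMOD (p : ℤ)]) ∧
              ((a * k + b * m₂ * n) * m₂' * u' ≡ (a * k' + b * m₂' * n') * m₂ * u
                [ZMOD (p : ℤ)]) ∧
              ¬ ((a * k + b * m₂ * n) * m₂' * u' ≡ 0 [ZMOD (p : ℤ)]) then (1 : ℝ)
          else 0) ≤
        C * (p : ℝ) ^ ε * (K * N * U * (K + M ^ 2) *
          (1 + ((|a| : ℝ) * K + 2 * (|b| : ℝ) * M * N) * M * U / (p : ℝ)) ^ 2) := by
  obtain ⟨C, hC, hbound⟩ := counting_J2_general hε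
  refine ⟨16 * C, by positivity, fun p hp a b hab K M N U hK hM hN hU ↦ ?_⟩
  have hcount := hbound p hp a b hab K (2 * N) M (2 * U) hK (by linarith) hM (by linarith)
  simp only [← sum_product']
  rw [sum_boole]
  calc _ ≤ (#{q ∈ tupleBox K (2 * N) M (2 * U) ×ˢ tupleBox K (2 * N) M (2 * U) |
          DoublyLinkedMod p a b q.1 q.2} : ℝ) := by
        refine mod_cast card_le_card_of_injOn (fun (k, k', m₁, m₁', m₂, m₂', n, n', u, u') ↦
          (((k, n), (u', m₁', m₂')), ((k', n'), (u, m₁, m₂)))) ?_ ?_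
        · rintro ⟨k, k', m₁, m₁', m₂, m₂', n, n', u, u'⟩ hq
          simp only [coe_filter, mem_product, Set.mem_ofPred_eq] at hq
          obtain ⟨⟨hk, hk', hm₁, hm₁', hm₂, hm₂', hn, hn', hu, hu'⟩, -, hne, h₁, h₁', h₂, h₂'⟩ := hq
          simp only [coe_filter, mem_product, Set.mem_ofPred_eq, tupleBox]
          exact ⟨⟨⟨⟨hk, hn⟩, Ioc_floor_subset_Icc_one hu', hm₁', hm₂'⟩, ⟨hk', hn'⟩,
            Ioc_floor_subset_Icc_one hu, hm₁, hm₂⟩, hne, ⟨h₁, h₁'⟩, h₂, h₂'⟩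
        · rintro ⟨k, k', m₁, m₁', m₂, m₂', n, n', u, u'⟩ _ ⟨_, _⟩ _ h
          simp_all
    _ ≤ _ := hcount.trans <| mul_one_add_amplitude_sq_le (by positivity) (by linarith)
        (by linarith) (by linarith) (by linarith)
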